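/- Let p and q = (p+1)/2 both be primes with p ≡ 5 (mod 8). Then C_su(p) = C_t(q); that is, the number of self-complementary undirected circulant graphs of order p equals the number of circulant tournaments of order q. -/

import Mathlib

open Finset

/-- Number of self-complementary undirected circulant graphs of odd prime order `p`:
`C_su(p) = (2/(p-1))·∑_{r | (p-1)/2, r even} φ(r)·2^{(p-1)/(2r)}`. -/
def Csu (p : ℕ) : ℚ :=
  (2 / ((p : ℚ) - 1)) *
    ∑ r ∈ ((p - 1) / 2).divisors.filter (fun r => Even r),
      (Nat.totient r : ℚ) * (2 : ℚ) ^ ((p - 1) / (2 * r))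

/-- Number of circulant tournaments of odd prime order `q`:
`C_t(q) = (1/(q-1))·∑_{r | q-1, r odd} φ(r)·2^{(q-1)/(2r)}`. -/
def Ct (q : ℕ) : ℚ :=
  (1 / ((q : ℚ) - 1)) *
    ∑ r ∈ (q - 1).divisors.filter (fun r => Odd r),
      (Nat.totient r : ℚ) * (2 : ℚ) ^ ((q - 1) / (2 * r))

/-- For odd `m`, multiplication by `2` maps the odd divisors of `2 * m` bijectively onto the even
ones. -/
theorem sum_even_divisors_two_mul {M : Type*} [AddCommMonoid M] {m : ℕ} (hm : Odd m) (f : ℕ → M) :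
    ∑ r ∈ (2 * m).divisors with Even r, f r = ∑ r ∈ (2 * m).divisors with Odd r, f (2 * r) := by
  symm
  refine Finset.sum_bij (fun r _ => 2 * r) ?_ ?_ ?_ fun _ _ => rfl
  · intro r hr
    rw [mem_filter, Nat.mem_divisors] at hr ⊢
    exact ⟨⟨mul_dvd_mul_left 2 ((Nat.coprime_two_right.mpr hr.2).dvd_of_dvd_mul_left hr.1.1),
      hr.1.2⟩, even_two_mul r⟩
  · intro a _ b _ h
    exact Nat.eq_of_mul_eq_mul_left two_pos h
  · intro r hr
    rw [mem_filter, Nat.mem_divisors] at hr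
    obtain ⟨⟨hdvd, hne⟩, heven⟩ := hr
    obtain ⟨s, rfl⟩ := heven.two_dvd
    have hs : s ∣ m := Nat.dvd_of_mul_dvd_mul_left two_pos hdvd
    exact ⟨s, mem_filter.mpr ⟨Nat.mem_divisors.mpr ⟨hs.mul_left 2, hne⟩, hm.of_dvd_nat hs⟩, rfl⟩

/-- If `p` and `q = (p+1)/2` are both prime and `p ≡ 5 (mod 8)`,
then `C_su(p) = C_t(q)`. -/
theorem Csu_eq_Ct (p q : ℕ) (hp : p.Prime) (hq : q.Prime)
    (hpq : p + 1 = 2 * q) (hmod : p % 8 = 5) :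
    Csu p = Ct q := by
  obtain ⟨k, rfl⟩ : ∃ k, p = 8 * k + 5 := ⟨p / 8, by omega⟩
  obtain rfl : q = 4 * k + 3 := by omega
  have hp_half : (8 * k + 5 - 1) / 2 = 2 * (2 * k + 1) := by omega
  have hq_pred : 4 * k + 3 - 1 = 2 * (2 * k + 1) := by omega
  have hp_pred : 8 * k + 5 - 1 = 2 * (2 * (2 * k + 1)) := by omega
  unfold Csu Ct
  rw [hp_half, hq_pred, hp_pred, sum_even_divisors_two_mul (odd_two_mul_add_one k)]
  congr 1
  · push_cast
    have h : (4 * k + 3 - 1 : ℚ) ≠ 0 := by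
      have : (0 : ℚ) ≤ k := k.cast_nonneg
      linarith
    rw [show (8 * k + 5 - 1 : ℚ) = 2 * (4 * k + 3 - 1) by ring]
    field_simp
  · refine sum_congr rfl fun r hr => ?_
    have hr_odd : Odd r := (mem_filter.mp hr).2
    rw [Nat.totient_two_mul_of_odd hr_odd, Nat.mul_div_mul_left _ _ two_pos]
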